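/- Let K ≥ 1, and for k = 1, …, K let λ_k > 0 and 0 < α_k ≤ 1; set p_k := 1/α_k. Define C : ℤ → [0,∞) by C(0) := 0 and C(z) := Σ_{k=1}^K λ_k |z|^{α_k} for z ≠ 0. Then: (a) C is even, C(z) = 0 iff z = 0, C(z) ≤ C(w) whenever z ⪯ w, and C(x)/x ≤ C(y)/y for all integers 1 ≤ y ≤ x (condition (iii')); and (b) for every positive integer N, the norm ∥x∥ := Σ_{k=1}^K λ_k ∥x∥_{ℓ^{p_k}} on ℝ^N is monotone and satisfies the single-material compatibility equation for C. -/

import Mathlib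

/-- `f` is a norm on the real vector space `E`. -/
def IsNorm {E : Type*} [AddCommGroup E] [Module ℝ E] (f : E → ℝ) : Prop :=
  (∀ x, 0 ≤ f x) ∧ (∀ x, f x = 0 ↔ x = 0) ∧
    (∀ x y, f (x + y) ≤ f x + f y) ∧ ∀ (c : ℝ) (x : E), f (c • x) = |c| * f x

/-- The partial order `x ⪯ y` on real vectors. -/
def PreOrd {ι : Type*} (x y : ι → ℝ) : Prop :=
  ∀ j, |x j| ≤ |y j| ∧ 0 ≤ x j * y j

/-- The single-material (`m = 1`) compatibility equation between a cost `C : ℤ → ℝ`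
and a norm `nrm` on `ℝ^N`. -/
def CompatEq1 (N : ℕ) (C : ℤ → ℝ) (nrm : (Fin N → ℝ) → ℝ) : Prop :=
  ∀ θ : ℤ, θ.natAbs ≤ N →
    ∀ K : Finset (Fin N), K.card = θ.natAbs →
      C θ = nrm fun j => (θ.sign : ℝ) * (if j ∈ K then 1 else 0)

/-!
Sublinear costs, norms, monotonicity and the compatibility equation are all preserved by linear
combinations with positive weights, so it suffices to treat a single cost `|z| ^ α`. For
`p = 1 / α`, a vector with `|θ|` entries equal to `sign θ` and all others zero has `ℓ^p` norm
`|θ| ^ (1 / p) = |θ| ^ α`, and `|z| ^ α / z = z ^ (α - 1)` is antitone on `z > 0` since `α ≤ 1`.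
-/

/-- The cost axioms (i), (ii) and (iii') of the paper, for a single material. -/
structure IsSublinearCost (C : ℤ → ℝ) : Prop where
  map_neg : ∀ z, C (-z) = C z
  eq_zero_iff : ∀ z, C z = 0 ↔ z = 0
  mono : ∀ z w : ℤ, |z| ≤ |w| → 0 ≤ z * w → C z ≤ C w
  div_self_anti : ∀ x y : ℤ, 1 ≤ y → y ≤ x → C x / (x : ℝ) ≤ C y / (y : ℝ)

/-- Monotonicity with respect to `⪯` of a function on `ℝ^ι`; this is what makes a norm monotone in
the sense of the paper. -/
def IsPreOrdMonotone {ι : Type*} (f : (ι → ℝ) → ℝ) : Prop :=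
  ∀ x y, PreOrd x y → f x ≤ f y

/-- The `ℓ^p` norm on `ℝ^ι`, written out with real powers so that `p` is a real number rather than
an element of `ℝ≥0∞`; it is a norm for `1 ≤ p`, and takes junk values for `p = 0`. -/
noncomputable def lpNorm {ι : Type*} [Fintype ι] (p : ℝ) (x : ι → ℝ) : ℝ :=
  (∑ j, |x j| ^ p) ^ (1 / p)

section WeightedSum

variable {κ : Type*} [Fintype κ] {w : κ → ℝ}

theorem sum_mul_eq_zero_iff_of_pos {a : κ → ℝ} (hw : ∀ k, 0 < w k) (ha : ∀ k, 0 ≤ a k) :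
    ∑ k, w k * a k = 0 ↔ ∀ k, a k = 0 := by
  rw [Finset.sum_eq_zero_iff_of_nonneg fun k _ => mul_nonneg (hw k).le (ha k)]
  simp [(hw _).ne']

theorem sum_mul_le_sum_mul {a b : κ → ℝ} (hw : ∀ k, 0 ≤ w k) (hab : ∀ k, a k ≤ b k) :
    ∑ k, w k * a k ≤ ∑ k, w k * b k :=
  Finset.sum_le_sum fun k _ => mul_le_mul_of_nonneg_left (hab k) (hw k)

theorem IsSublinearCost.nonneg {C : ℤ → ℝ} (hC : IsSublinearCost C) (z : ℤ) : 0 ≤ C z :=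
  calc
    0 = C 0 := ((hC.eq_zero_iff 0).2 rfl).symm
    _ ≤ C z := hC.mono 0 z (by simp) (by simp)

theorem IsSublinearCost.sum_mul [Nonempty κ] {C : κ → ℤ → ℝ} (hw : ∀ k, 0 < w k)
    (hC : ∀ k, IsSublinearCost (C k)) : IsSublinearCost fun z => ∑ k, w k * C k z where
  map_neg z := by simp only [(hC _).map_neg]
  eq_zero_iff z := by
    rw [sum_mul_eq_zero_iff_of_pos hw fun k => (hC k).nonneg z]
    simp only [(hC _).eq_zero_iff, forall_const]
  mono z z' hle hsign := sum_mul_le_sum_mul (fun k => (hw k).le) fun k => (hC k).mono z z' hle hsign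
  div_self_anti x y hy hyx := by
    simp only [Finset.sum_div, mul_div_assoc]
    exact sum_mul_le_sum_mul (fun k => (hw k).le) fun k => (hC k).div_self_anti x y hy hyx

theorem IsNorm.sum_mul [Nonempty κ] {E : Type*} [AddCommGroup E] [Module ℝ E] {f : κ → E → ℝ}
    (hw : ∀ k, 0 < w k) (hf : ∀ k, IsNorm (f k)) : IsNorm fun x => ∑ k, w k * f k x := by
  choose nonneg eq_zero_iff add_le smul using hf
  refine ⟨fun x => Finset.sum_nonneg fun k _ => mul_nonneg (hw k).le (nonneg k x),
    fun x => ?_, fun x y => ?_, fun c x => ?_⟩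
  · rw [sum_mul_eq_zero_iff_of_pos hw fun k => nonneg k x]
    simp only [eq_zero_iff, forall_const]
  · simp only [← Finset.sum_add_distrib, ← mul_add]
    exact sum_mul_le_sum_mul (fun k => (hw k).le) fun k => add_le k x y
  · simp only [smul, Finset.mul_sum, mul_left_comm]

theorem IsPreOrdMonotone.sum_mul {ι : Type*} {f : κ → (ι → ℝ) → ℝ} (hw : ∀ k, 0 ≤ w k)
    (hf : ∀ k, IsPreOrdMonotone (f k)) : IsPreOrdMonotone fun x => ∑ k, w k * f k x :=
  fun x y hxy => sum_mul_le_sum_mul hw fun k => hf k x y hxy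

theorem CompatEq1.sum_mul {N : ℕ} {C : κ → ℤ → ℝ} {f : κ → (Fin N → ℝ) → ℝ} (w : κ → ℝ)
    (h : ∀ k, CompatEq1 N (C k) (f k)) :
    CompatEq1 N (fun z => ∑ k, w k * C k z) fun x => ∑ k, w k * f k x :=
  fun θ hθ S hS => Finset.sum_congr rfl fun k _ => congrArg (w k * ·) (h k θ hθ S hS)

end WeightedSum

section LpNorm

variable {ι : Type*} [Fintype ι] {p : ℝ}

theorem lpNorm_eq_norm_toLp (hp : 0 < p) (x : ι → ℝ) :
    lpNorm p x = ‖WithLp.toLp (ENNReal.ofReal p) x‖ := by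
  have htoReal : (ENNReal.ofReal p).toReal = p := ENNReal.toReal_ofReal hp.le
  rw [PiLp.norm_eq_sum (htoReal.symm ▸ hp), htoReal]
  rfl

theorem isNorm_lpNorm (hp : 1 ≤ p) : IsNorm (lpNorm p : (ι → ℝ) → ℝ) := by
  have : Fact (1 ≤ ENNReal.ofReal p) := ⟨ENNReal.one_le_ofReal.2 hp⟩
  simp only [IsNorm, lpNorm_eq_norm_toLp (one_pos.trans_le hp), WithLp.toLp_add, WithLp.toLp_smul]
  exact ⟨fun x => norm_nonneg _, fun x => norm_eq_zero.trans (WithLp.toLp_eq_zero _),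
    fun x y => norm_add_le _ _, fun c x => norm_smul c _⟩

theorem lpNorm_le_lpNorm_of_abs_le {x y : ι → ℝ} (hp : 0 ≤ p) (hxy : ∀ j, |x j| ≤ |y j|) :
    lpNorm p x ≤ lpNorm p y :=
  Real.rpow_le_rpow (by positivity)
    (Finset.sum_le_sum fun j _ => Real.rpow_le_rpow (abs_nonneg _) (hxy j) hp) (by positivity)

theorem isPreOrdMonotone_lpNorm (hp : 0 ≤ p) : IsPreOrdMonotone (lpNorm p : (ι → ℝ) → ℝ) :=
  fun _ _ hxy => lpNorm_le_lpNorm_of_abs_le hp fun j => (hxy j).1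

theorem lpNorm_mul_ite_mem [DecidableEq ι] (hp : 0 < p) (c : ℝ) (S : Finset ι) :
    lpNorm p (fun j => c * if j ∈ S then 1 else 0) = |c| * (S.card : ℝ) ^ (1 / p) := by
  have hterm (j : ι) : |c * if j ∈ S then 1 else 0| ^ p = if j ∈ S then |c| ^ p else 0 := by
    split_ifs <;> simp [Real.zero_rpow hp.ne']
  have hsum : ∑ j, |c * if j ∈ S then 1 else 0| ^ p = |c| ^ p * S.card := by
    simp only [hterm, Finset.sum_ite_mem, Finset.univ_inter, Finset.sum_const, nsmul_eq_mul,
      mul_comm]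
  rw [lpNorm, hsum, Real.mul_rpow (by positivity) (by positivity), one_div,
    Real.rpow_rpow_inv (abs_nonneg c) hp.ne']

end LpNorm

section GilbertSteiner

variable {α : ℝ}

theorem antitoneOn_rpow_div_self (hα : α ≤ 1) :
    AntitoneOn (fun x : ℝ => x ^ α / x) (Set.Ioi 0) :=
  (Real.antitoneOn_rpow_Ioi_of_exponent_nonpos (sub_nonpos.2 hα)).congr
    fun _ hx => Real.rpow_sub_one (ne_of_gt hx) α

theorem isSublinearCost_abs_rpow (hα0 : 0 < α) (hα1 : α ≤ 1) :
    IsSublinearCost fun z => |(z : ℝ)| ^ α where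
  map_neg z := by simp only [Int.cast_neg, abs_neg]
  eq_zero_iff z := by simp [Real.rpow_eq_zero (abs_nonneg _) hα0.ne']
  mono z w hle _ := Real.rpow_le_rpow (abs_nonneg _) (by exact_mod_cast hle) hα0.le
  div_self_anti x y hy hyx := by
    have hy' : (0 : ℝ) < y := by exact_mod_cast hy
    have hyx' : (y : ℝ) ≤ x := by exact_mod_cast hyx
    have hx' : (0 : ℝ) < x := hy'.trans_le hyx'
    simpa only [abs_of_pos hx', abs_of_pos hy'] using antitoneOn_rpow_div_self hα1 hy' hx' hyx'

theorem abs_sign_mul_abs_rpow (hα : α ≠ 0) (z : ℤ) :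
    |(z.sign : ℝ)| * |(z : ℝ)| ^ α = |(z : ℝ)| ^ α := by
  rcases lt_trichotomy z 0 with hz | rfl | hz
  · simp [Int.sign_eq_neg_one_of_neg hz]
  · simp [Real.zero_rpow hα]
  · simp [Int.sign_eq_one_of_pos hz]

theorem compatEq1_abs_rpow_lpNorm (N : ℕ) (hα : 0 < α) :
    CompatEq1 N (fun z => |(z : ℝ)| ^ α) (lpNorm (1 / α)) := by
  intro θ _ S hS
  rw [lpNorm_mul_ite_mem (one_div_pos.2 hα), hS, one_div_one_div, Nat.cast_natAbs, Int.cast_abs,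
    abs_sign_mul_abs_rpow hα.ne']

theorem ite_sum_mul_abs_rpow {κ : Type*} [Fintype κ] {w a : κ → ℝ} (ha : ∀ k, a k ≠ 0) (z : ℤ) :
    (if z = 0 then 0 else ∑ k, w k * |(z : ℝ)| ^ a k) = ∑ k, w k * |(z : ℝ)| ^ a k := by
  split_ifs with hz
  · simp [hz, Real.zero_rpow (ha _)]
  · rfl

end GilbertSteiner

/-- Linear combinations of Gilbert–Steiner costs: for `λ_k > 0`
and `0 < α_k ≤ 1`, `p_k := 1/α_k`, the cost `C(z) := ∑_k λ_k |z|^{α_k}` (`C(0) = 0`)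
satisfies (a) the cost axioms (i), (ii), and the sublinearity condition (iii'); and
(b) for every positive integer `N`, the norm `∥x∥ := ∑_k λ_k ∥x∥_{ℓ^{p_k}}` on `ℝ^N`
is monotone and satisfies the single-material compatibility equation for `C`. -/
theorem linear_combination_cost_compatible_norm
    (K : ℕ) (hK : 1 ≤ K)
    (lam : Fin K → ℝ) (hlam : ∀ k, 0 < lam k)
    (α : Fin K → ℝ) (hα0 : ∀ k, 0 < α k) (hα1 : ∀ k, α k ≤ 1)
    (p : Fin K → ℝ) (hp : ∀ k, p k = 1 / α k)
    (C : ℤ → ℝ)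
    (hC : C = fun z : ℤ =>
      if z = 0 then 0 else ∑ k, lam k * |(z : ℝ)| ^ (α k)) :
    ((∀ z, C (-z) = C z) ∧
     (∀ z, C z = 0 ↔ z = 0) ∧
     (∀ z w : ℤ, |z| ≤ |w| → 0 ≤ z * w → C z ≤ C w) ∧
     (∀ x y : ℤ, 1 ≤ y → y ≤ x → C x / (x : ℝ) ≤ C y / (y : ℝ))) ∧
    (∀ N : ℕ, 0 < N →
      IsNorm (fun x : Fin N → ℝ =>
        ∑ k, lam k * (∑ j, |x j| ^ (p k)) ^ (1 / p k)) ∧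
      (∀ x y : Fin N → ℝ, PreOrd x y →
        (∑ k, lam k * (∑ j, |x j| ^ (p k)) ^ (1 / p k)) ≤
        (∑ k, lam k * (∑ j, |y j| ^ (p k)) ^ (1 / p k))) ∧
      CompatEq1 N C (fun x =>
        ∑ k, lam k * (∑ j, |x j| ^ (p k)) ^ (1 / p k))) := by
  have : Nonempty (Fin K) := ⟨⟨0, hK⟩⟩
  have hp1 (k : Fin K) : 1 ≤ p k := hp k ▸ one_le_one_div (hα0 k) (hα1 k)
  have hC_sum : C = fun z : ℤ => ∑ k, lam k * |(z : ℝ)| ^ α k :=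
    hC.trans (funext (ite_sum_mul_abs_rpow fun k => (hα0 k).ne'))
  have hcost : IsSublinearCost C :=
    hC_sum ▸ .sum_mul hlam fun k => isSublinearCost_abs_rpow (hα0 k) (hα1 k)
  refine ⟨⟨hcost.map_neg, hcost.eq_zero_iff, hcost.mono, hcost.div_self_anti⟩,
    fun N _ => ⟨?_, ?_, ?_⟩⟩
  · exact .sum_mul hlam fun k => isNorm_lpNorm (hp1 k)
  · exact IsPreOrdMonotone.sum_mul (fun k => (hlam k).le) fun k =>
      isPreOrdMonotone_lpNorm (zero_le_one.trans (hp1 k))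
  · rw [hC_sum]
    exact .sum_mul lam fun k => hp k ▸ compatEq1_abs_rpow_lpNorm N (hα0 k)
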